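/- arXiv:1312.7860 — 2 statements merged into one kernel-verified Lean document; each statement's English description precedes it below -/
import Mathlib

section
/- Let α_x ≥ 0, α_p > 0, α_z ≥ 0, σ_μ ≥ 0, set α = α_x + α_p + α_z and α_ψ = α²/(α_x + α_p²·σ_μ²). If √(α_x/(α_p + α_z)² + σ_μ²/(1 + α_z/α_p)²) ≥ 1/√(2π), then for every Z ∈ ℝ, every x_c ∈ ℝ and every m ∈ ℝ, the equation Φ(√α_ψ·(((α_z + α_p)/α)·θ − (α_z/α)·Z − (α_p/α)·m − x_c/√α)) = θ has exactly one real solution θ*, and θ* ∈ (0,1). -/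
/-- The standard normal cumulative distribution function. -/
noncomputable def stdNormalCDF (x : ℝ) : ℝ :=
  ∫ t in Set.Iic x, (Real.sqrt (2 * Real.pi))⁻¹ * Real.exp (-t ^ 2 / 2)

/-!
The slope of `θ ↦ √α_ψ (((α_z + α_p) / α) θ - ⋯)` is the reciprocal of the left-hand side of
condition (4), so (4) says that this slope is at most `√(2π)`, the reciprocal of the maximum of the
standard normal density. That maximum is attained at one point only, so `θ - Φ(kθ + b)` is
*strictly* increasing even when `k = √(2π)`. Hence there is at most one fixed point; one exists by
the intermediate value theorem because `Φ` is continuous with values in `(0, 1)`.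
-/

open MeasureTheory ProbabilityTheory Set Function
open scoped NNReal Real

lemma existsUnique_isFixedPt_of_injective_id_sub {f : ℝ → ℝ} {a b : ℝ} (hcont : Continuous f)
    (hmem : ∀ x, f x ∈ Icc a b) (hinj : Injective fun x ↦ x - f x) : ∃! x, IsFixedPt f x := by
  have hab : a ≤ b := nonempty_Icc.mp ⟨f 0, hmem 0⟩
  obtain ⟨x, -, hx⟩ :=
    exists_mem_Icc_isFixedPt_of_mapsTo hcont.continuousOn hab fun x _ ↦ hmem x
  refine ⟨x, hx, fun y hy ↦ hinj ?_⟩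
  simp only [hx.eq, hy.eq, sub_self]

section Gaussian

variable {μ : ℝ} {v : ℝ≥0} {x y : ℝ}

lemma gaussianPDFReal_le_inv_sqrt (μ : ℝ) (v : ℝ≥0) (x : ℝ) :
    gaussianPDFReal μ v x ≤ (√(2 * π * v))⁻¹ :=
  mul_le_of_le_one_right (by positivity) <| Real.exp_le_one_iff.mpr <|
    div_nonpos_of_nonpos_of_nonneg (neg_nonpos.mpr (sq_nonneg _)) (by positivity)

lemma gaussianPDFReal_lt_inv_sqrt (hv : v ≠ 0) (hx : x ≠ μ) :
    gaussianPDFReal μ v x < (√(2 * π * v))⁻¹ := by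
  have hsq : 0 < (x - μ) ^ 2 := sq_pos_of_ne_zero (sub_ne_zero.mpr hx)
  refine mul_lt_of_lt_one_right (by positivity) (Real.exp_lt_one_iff.mpr ?_)
  exact div_neg_of_neg_of_pos (neg_neg_of_pos hsq) (by positivity)

lemma continuous_gaussianPDFReal (μ : ℝ) (v : ℝ≥0) : Continuous (gaussianPDFReal μ v) := by
  unfold gaussianPDFReal
  fun_prop

lemma cdf_gaussianReal_eq_integral (hv : v ≠ 0) (x : ℝ) :
    cdf (gaussianReal μ v) x = ∫ t in Iic x, gaussianPDFReal μ v t := by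
  rw [cdf_eq_real, measureReal_def, gaussianReal_apply_eq_integral μ hv,
    ENNReal.toReal_ofReal (integral_nonneg (gaussianPDFReal_nonneg μ v))]

lemma cdf_gaussianReal_sub_eq_integral (hv : v ≠ 0) (x y : ℝ) :
    cdf (gaussianReal μ v) y - cdf (gaussianReal μ v) x = ∫ t in x..y, gaussianPDFReal μ v t := by
  have hint := integrable_gaussianPDFReal μ v
  simp only [cdf_gaussianReal_eq_integral hv]
  exact intervalIntegral.integral_Iic_sub_Iic hint.integrableOn hint.integrableOn

lemma continuous_cdf_gaussianReal (hv : v ≠ 0) : Continuous (cdf (gaussianReal μ v)) := by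
  have hprim := ((integrable_gaussianPDFReal μ v).continuous_primitive 0).add_const
    (cdf (gaussianReal μ v) 0)
  simpa only [← cdf_gaussianReal_sub_eq_integral hv, sub_add_cancel] using hprim

lemma strictMono_cdf_gaussianReal (hv : v ≠ 0) : StrictMono (cdf (gaussianReal μ v)) := by
  intro x y hxy
  rw [← sub_pos, cdf_gaussianReal_sub_eq_integral hv]
  exact intervalIntegral.intervalIntegral_pos_of_pos
    (integrable_gaussianPDFReal μ v).intervalIntegrable
    (fun t ↦ gaussianPDFReal_pos μ v t hv) hxy

lemma cdf_gaussianReal_mem_Ioo (hv : v ≠ 0) (x : ℝ) : cdf (gaussianReal μ v) x ∈ Ioo 0 1 :=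
  ⟨(cdf_nonneg _ (x - 1)).trans_lt (strictMono_cdf_gaussianReal hv (sub_one_lt x)),
    (strictMono_cdf_gaussianReal hv (lt_add_one x)).trans_le (cdf_le_one _ (x + 1))⟩

lemma cdf_gaussianReal_sub_lt (hv : v ≠ 0) (hxy : x < y) :
    cdf (gaussianReal μ v) y - cdf (gaussianReal μ v) x < (√(2 * π * v))⁻¹ * (y - x) := by
  obtain ⟨t, ht, htμ⟩ : ∃ t ∈ Icc x y, t ≠ μ := (Icc_infinite hxy).nontrivial.exists_ne μ
  calc cdf (gaussianReal μ v) y - cdf (gaussianReal μ v) x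
      = ∫ s in x..y, gaussianPDFReal μ v s := cdf_gaussianReal_sub_eq_integral hv x y
    _ < ∫ _ in x..y, (√(2 * π * v))⁻¹ :=
        intervalIntegral.integral_lt_integral_of_continuousOn_of_le_of_exists_lt hxy
          (continuous_gaussianPDFReal μ v).continuousOn continuousOn_const
          (fun s _ ↦ gaussianPDFReal_le_inv_sqrt μ v s) ⟨t, ht, gaussianPDFReal_lt_inv_sqrt hv htμ⟩
    _ = (√(2 * π * v))⁻¹ * (y - x) := by
        rw [intervalIntegral.integral_const, smul_eq_mul, mul_comm]

lemma strictMono_id_sub_cdf_gaussianReal_affine {k : ℝ} (hv : v ≠ 0) (hk : k ≤ √(2 * π * v))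
    (b : ℝ) : StrictMono fun x ↦ x - cdf (gaussianReal μ v) (k * x + b) := by
  intro x y hxy
  suffices cdf (gaussianReal μ v) (k * y + b) - cdf (gaussianReal μ v) (k * x + b) < y - x by
    simp only
    linarith
  rcases le_or_gt k 0 with hk0 | hk0
  · have hanti : k * y + b ≤ k * x + b := by
      gcongr ?_ + b
      exact mul_le_mul_of_nonpos_left hxy.le hk0
    linarith [monotone_cdf (gaussianReal μ v) hanti]
  · have hsqrt : 0 < √(2 * π * v) := hk0.trans_le hk
    calc cdf (gaussianReal μ v) (k * y + b) - cdf (gaussianReal μ v) (k * x + b)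
        < (√(2 * π * v))⁻¹ * ((k * y + b) - (k * x + b)) :=
          cdf_gaussianReal_sub_lt hv (by gcongr)
      _ = (√(2 * π * v))⁻¹ * k * (y - x) := by ring
      _ ≤ y - x := mul_le_of_le_one_left (sub_nonneg.mpr hxy.le)
          ((inv_mul_le_one₀ hsqrt).mpr hk)

lemma existsUnique_cdf_gaussianReal_affine_eq {k : ℝ} (hv : v ≠ 0) (hk : k ≤ √(2 * π * v))
    (b : ℝ) : ∃! x, cdf (gaussianReal μ v) (k * x + b) = x :=
  existsUnique_isFixedPt_of_injective_id_sub
    ((continuous_cdf_gaussianReal hv).comp (by fun_prop))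
    (fun _ ↦ Ioo_subset_Icc_self (cdf_gaussianReal_mem_Ioo hv _))
    (strictMono_id_sub_cdf_gaussianReal_affine hv hk b).injective

lemma stdNormalCDF_eq_cdf (x : ℝ) : stdNormalCDF x = cdf (gaussianReal 0 1) x := by
  rw [cdf_gaussianReal_eq_integral one_ne_zero]
  simp only [stdNormalCDF, gaussianPDFReal, NNReal.coe_one, mul_one, sub_zero]

end Gaussian

lemma sqrt_mul_precision_ratio_eq_inv_sqrt {α αx αp αz σμ : ℝ} (hα : 0 < α) (hαp : αp ≠ 0)
    (hs : 0 < αp + αz) :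
    √(α ^ 2 / (αx + αp ^ 2 * σμ ^ 2)) * ((αz + αp) / α) =
      (√(αx / (αp + αz) ^ 2 + σμ ^ 2 / (1 + αz / αp) ^ 2))⁻¹ := by
  have hcond : αx / (αp + αz) ^ 2 + σμ ^ 2 / (1 + αz / αp) ^ 2 =
      (αx + αp ^ 2 * σμ ^ 2) / (αp + αz) ^ 2 := by
    rw [one_add_div hαp]
    field
  rw [hcond, Real.sqrt_div (sq_nonneg α), Real.sqrt_div' _ (sq_nonneg (αp + αz)),
    Real.sqrt_sq hα.le, Real.sqrt_sq hs.le, inv_div, add_comm αz]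
  field

theorem stmt_6 (αx αp αz σμ : ℝ) (hαx : 0 ≤ αx) (hαp : 0 < αp) (hαz : 0 ≤ αz)
    (hσμ : 0 ≤ σμ)
    (α αψ : ℝ) (hα : α = αx + αp + αz) (hαψ : αψ = α ^ 2 / (αx + αp ^ 2 * σμ ^ 2))
    (h : Real.sqrt (αx / (αp + αz) ^ 2 + σμ ^ 2 / (1 + αz / αp) ^ 2) ≥
      1 / Real.sqrt (2 * Real.pi)) :
    ∀ Z xc m : ℝ,
      ∃ θ ∈ Set.Ioo (0 : ℝ) 1,
        stdNormalCDF (Real.sqrt αψ *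
          (((αz + αp) / α) * θ - (αz / α) * Z - (αp / α) * m - xc / Real.sqrt α)) = θ ∧
        ∀ θ' : ℝ,
          stdNormalCDF (Real.sqrt αψ *
            (((αz + αp) / α) * θ' - (αz / α) * Z - (αp / α) * m - xc / Real.sqrt α)) = θ' →
          θ' = θ := by
  intro Z xc m
  have hslope : √αψ * ((αz + αp) / α) ≤ √(2 * π * (1 : ℝ≥0)) := by
    have hα_pos : 0 < α := by rw [hα]; positivity
    rw [hαψ, sqrt_mul_precision_ratio_eq_inv_sqrt hα_pos hαp.ne' (by positivity),
      NNReal.coe_one, mul_one]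
    exact inv_le_of_inv_le₀ (by positivity) (one_div √(2 * π) ▸ h)
  have haffine (θ : ℝ) :
      √αψ * (((αz + αp) / α) * θ - (αz / α) * Z - (αp / α) * m - xc / √α) =
        √αψ * ((αz + αp) / α) * θ + √αψ * (-(αz / α) * Z - (αp / α) * m - xc / √α) := by ring
  simp only [haffine, stdNormalCDF_eq_cdf]
  obtain ⟨θ, hθ, hunique⟩ := existsUnique_cdf_gaussianReal_affine_eq (μ := 0) one_ne_zero hslope
    (√αψ * (-(αz / α) * Z - (αp / α) * m - xc / √α))
  exact ⟨θ, hθ ▸ cdf_gaussianReal_mem_Ioo one_ne_zero _, hθ, hunique⟩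
end

section
/- Let α_x > 0, α_p > 0, σ_μ ≥ 0, σ_ε > 0, set α_z = α_x²/(σ_ε²·(α_x + α_p²·σ_μ²)), α = α_x + α_p + α_z and α_ψ = α²/(α_x + α_p²·σ_μ²). If 1/√(2π) ≤ ((α_x + α_z)/α_x)·√(α_x/α_p² + σ_μ²), then for every S ∈ ℝ, every m ∈ ℝ and every c ∈ (0,1), there exists exactly one pair (θ, y) with θ ∈ (0,1), Φ(y) = θ, and Φ(√α·((α_p/α)·θ − (1/√α_ψ)·((α_x + α_z)/α_x)·y − ((α_x + α_z)·α_p/(α_x·α))·m + (α_z/α_x)·(1/√α_ψ)·S)) = c. -/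
/-! Substituting `θ = Φ y` and inverting the outer `Φ` turns the equilibrium equation into
`b y - a Φ(y) = const` with `a = α_p / α` and `b = (α_x + α_z) / (α_x √α_ψ)`. The density of `Φ` is
at most `1 / √(2π)`, with equality only at `0`, so the left side is strictly increasing as soon as
`a / √(2π) ≤ b`, which is the assumed inequality multiplied by `a`. It is onto because `Φ` is
bounded and `b > 0`. -/

open MeasureTheory ProbabilityTheory Filter Set
open scoped Topology Real

theorem hasDerivAt_integral_Iic {E : Type*} [NormedAddCommGroup E] [NormedSpace ℝ E]
    [CompleteSpace E] {f : ℝ → E} (hf : Integrable f) {x : ℝ} (hx : ContinuousAt f x) :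
    HasDerivAt (fun u => ∫ t in Iic u, f t) (f x) x := by
  have hsplit : (fun u => ∫ t in Iic u, f t) =
      fun u => (∫ t in (0 : ℝ)..u, f t) + ∫ t in Iic 0, f t := by
    ext u
    rw [← intervalIntegral.integral_Iic_sub_Iic hf.integrableOn hf.integrableOn, sub_add_cancel]
  rw [hsplit]
  exact (intervalIntegral.integral_hasDerivAt_right hf.intervalIntegrable
    hf.aestronglyMeasurable.stronglyMeasurableAtFilter hx).add_const _

theorem strictMono_of_deriv_pos_of_ne {f : ℝ → ℝ} {c : ℝ} (hf : Continuous f)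
    (hf' : ∀ x ≠ c, 0 < deriv f x) : StrictMono f := by
  refine StrictMonoOn.Iic_union_Ici (a := c) ?_ ?_
  · refine strictMonoOn_of_deriv_pos (convex_Iic c) hf.continuousOn fun x hx => hf' x ?_
    rw [interior_Iic] at hx
    exact ne_of_lt hx
  · refine strictMonoOn_of_deriv_pos (convex_Ici c) hf.continuousOn fun x hx => hf' x ?_
    rw [interior_Ici] at hx
    exact ne_of_gt hx

theorem range_eq_Ioo_of_strictMono_of_tendsto {X Y : Type*} [LinearOrder X] [TopologicalSpace X]
    [PreconnectedSpace X] [Nonempty X] [NoMinOrder X] [NoMaxOrder X] [LinearOrder Y]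
    [TopologicalSpace Y] [OrderTopology Y] {f : X → Y} {a b : Y} (hf : Continuous f)
    (hmono : StrictMono f) (hbot : Tendsto f atBot (𝓝 a)) (htop : Tendsto f atTop (𝓝 b)) :
    range f = Ioo a b := by
  ext y
  constructor
  · rintro ⟨x, rfl⟩
    obtain ⟨l, hl⟩ := exists_lt x
    obtain ⟨u, hu⟩ := exists_gt x
    exact ⟨(hmono.monotone.le_of_tendsto hbot l).trans_lt (hmono hl),
      (hmono hu).trans_le (hmono.monotone.ge_of_tendsto htop u)⟩
  · rintro ⟨ha, hb⟩
    obtain ⟨l, hl⟩ := (hbot.eventually_lt_const ha).exists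
    obtain ⟨u, hu⟩ := (htop.eventually_const_lt hb).exists
    exact mem_range_of_exists_le_of_exists_ge hf ⟨l, hl.le⟩ ⟨u, hu.le⟩

theorem surjective_mul_sub_of_isBounded_range {f : ℝ → ℝ} {b : ℝ} (hf : Continuous f)
    (hbdd : Bornology.IsBounded (range f)) (hb : 0 < b) :
    Function.Surjective fun y => b * y - f y := by
  obtain ⟨C, hC⟩ := hbdd.exists_norm_le
  have habs : ∀ y, |f y| ≤ C := fun y => hC _ (mem_range_self y)
  have hcont : Continuous fun y => b * y - f y := by fun_prop
  refine hcont.surjective ?_ ?_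
  · exact tendsto_atTop_add_right_of_le _ (-C) (tendsto_id.const_mul_atTop hb)
      fun y => neg_le_neg (abs_le.1 (habs y)).2
  · exact tendsto_atBot_add_right_of_ge _ C (tendsto_id.const_mul_atBot hb)
      fun y => neg_le.1 (abs_le.1 (habs y)).1

theorem stdNormalCDF_eq_setIntegral_gaussianPDFReal (x : ℝ) :
    stdNormalCDF x = ∫ t in Iic x, gaussianPDFReal 0 1 t := by
  simp [stdNormalCDF, gaussianPDFReal]

theorem stdNormalCDF_eq_cdf_gaussianReal : stdNormalCDF = cdf (gaussianReal 0 1) := by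
  ext x
  rw [cdf_eq_real, measureReal_def, gaussianReal_apply_eq_integral 0 one_ne_zero,
    ENNReal.toReal_ofReal (integral_nonneg fun t => gaussianPDFReal_nonneg 0 1 t),
    stdNormalCDF_eq_setIntegral_gaussianPDFReal]

theorem hasDerivAt_stdNormalCDF (x : ℝ) :
    HasDerivAt stdNormalCDF (gaussianPDFReal 0 1 x) x := by
  have hcont : Continuous (gaussianPDFReal 0 1) := by
    unfold gaussianPDFReal
    fun_prop
  rw [funext stdNormalCDF_eq_setIntegral_gaussianPDFReal]
  exact hasDerivAt_integral_Iic (integrable_gaussianPDFReal 0 1) hcont.continuousAt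

theorem continuous_stdNormalCDF : Continuous stdNormalCDF :=
  continuous_iff_continuousAt.2 fun x => (hasDerivAt_stdNormalCDF x).continuousAt

theorem strictMono_stdNormalCDF : StrictMono stdNormalCDF :=
  strictMono_of_hasDerivAt_pos hasDerivAt_stdNormalCDF fun x =>
    gaussianPDFReal_pos 0 1 x one_ne_zero

theorem range_stdNormalCDF : range stdNormalCDF = Ioo 0 1 := by
  refine range_eq_Ioo_of_strictMono_of_tendsto continuous_stdNormalCDF strictMono_stdNormalCDF
    ?_ ?_ <;> rw [stdNormalCDF_eq_cdf_gaussianReal]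
  · exact tendsto_cdf_atBot _
  · exact tendsto_cdf_atTop _

theorem gaussianPDFReal_lt_of_ne {μ x : ℝ} {v : NNReal} (hv : v ≠ 0) (hx : x ≠ μ) :
    gaussianPDFReal μ v x < (√(2 * π * v))⁻¹ := by
  have hexp : Real.exp (-(x - μ) ^ 2 / (2 * v)) < 1 := by
    rw [Real.exp_lt_one_iff, neg_div, neg_lt_zero]
    have := sub_ne_zero.2 hx
    positivity
  exact mul_lt_of_lt_one_right (by positivity) hexp

theorem strictMono_mul_sub_mul_stdNormalCDF {a b : ℝ} (hb : 0 < b) (hab : a / √(2 * π) ≤ b) :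
    StrictMono fun y => b * y - a * stdNormalCDF y := by
  have hderiv (y : ℝ) : HasDerivAt (fun y => b * y - a * stdNormalCDF y)
      (b - a * gaussianPDFReal 0 1 y) y :=
    (hasDerivAt_const_mul b).fun_sub ((hasDerivAt_stdNormalCDF y).const_mul a)
  refine strictMono_of_deriv_pos_of_ne (c := 0)
    (continuous_iff_continuousAt.2 fun y => (hderiv y).continuousAt) fun y hy => ?_
  rw [(hderiv y).deriv, sub_pos]
  have hpos : 0 < gaussianPDFReal 0 1 y := gaussianPDFReal_pos 0 1 y one_ne_zero
  have hlt : gaussianPDFReal 0 1 y < (√(2 * π))⁻¹ := by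
    simpa using gaussianPDFReal_lt_of_ne one_ne_zero hy
  rcases le_or_gt a 0 with ha | ha
  · exact (mul_nonpos_of_nonpos_of_nonneg ha hpos.le).trans_lt hb
  · calc a * gaussianPDFReal 0 1 y < a * (√(2 * π))⁻¹ := mul_lt_mul_of_pos_left hlt ha
      _ ≤ b := by rwa [← div_eq_mul_inv]

theorem bijective_mul_sub_mul_stdNormalCDF {a b : ℝ} (hb : 0 < b) (hab : a / √(2 * π) ≤ b) :
    Function.Bijective fun y => b * y - a * stdNormalCDF y := by
  have hbdd : Bornology.IsBounded (range fun y => a * stdNormalCDF y) := by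
    rw [← image_univ, ← image_image (a * ·), image_univ, range_stdNormalCDF]
    exact (Metric.isBounded_Ioo 0 1).smul₀ a
  exact ⟨(strictMono_mul_sub_mul_stdNormalCDF hb hab).injective,
    surjective_mul_sub_of_isBounded_range (continuous_stdNormalCDF.const_mul a) hbdd hb⟩

theorem existsUnique_stdNormalCDF_mul_eq {a b c s : ℝ} (hb : 0 < b) (hab : a / √(2 * π) ≤ b)
    (hs : s ≠ 0) (hc : c ∈ Ioo (0 : ℝ) 1) (d : ℝ) :
    ∃! y, stdNormalCDF (s * (a * stdNormalCDF y - b * y - d)) = c := by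
  rw [← range_stdNormalCDF] at hc
  obtain ⟨x, rfl⟩ := hc
  have hiff (y : ℝ) : stdNormalCDF (s * (a * stdNormalCDF y - b * y - d)) = stdNormalCDF x ↔
      b * y - a * stdNormalCDF y = -(x / s) - d := by
    rw [strictMono_stdNormalCDF.injective.eq_iff, mul_comm, ← eq_div_iff hs]
    constructor <;> intro h <;> linarith
  simp only [hiff]
  exact (bijective_mul_sub_mul_stdNormalCDF hb hab).existsUnique _

theorem one_div_sqrt_sq_div_eq {α αx αp σμ : ℝ} (hα : 0 ≤ α) (hαp : 0 < αp) :
    1 / √(α ^ 2 / (αx + αp ^ 2 * σμ ^ 2)) = αp / α * √(αx / αp ^ 2 + σμ ^ 2) := by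
  have hvar : αx / αp ^ 2 + σμ ^ 2 = (αx + αp ^ 2 * σμ ^ 2) / αp ^ 2 := by field_simp
  rw [hvar, Real.sqrt_div (sq_nonneg α), Real.sqrt_sq hα, Real.sqrt_div' _ (sq_nonneg αp),
    Real.sqrt_sq hαp.le, one_div_div, div_mul_div_cancel₀' hαp.ne']

theorem stmt_11 (αx αp σμ σε : ℝ) (hαx : 0 < αx) (hαp : 0 < αp) (hσμ : 0 ≤ σμ)
    (hσε : 0 < σε)
    (αz α αψ : ℝ) (hαz : αz = αx ^ 2 / (σε ^ 2 * (αx + αp ^ 2 * σμ ^ 2)))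
    (hα : α = αx + αp + αz) (hαψ : αψ = α ^ 2 / (αx + αp ^ 2 * σμ ^ 2))
    (h : 1 / Real.sqrt (2 * Real.pi) ≤
      ((αx + αz) / αx) * Real.sqrt (αx / αp ^ 2 + σμ ^ 2)) :
    ∀ S m : ℝ, ∀ c ∈ Set.Ioo (0 : ℝ) 1,
      ∃! p : ℝ × ℝ,
        p.1 ∈ Set.Ioo (0 : ℝ) 1 ∧ stdNormalCDF p.2 = p.1 ∧
        stdNormalCDF (Real.sqrt α *
          ((αp / α) * p.1 - (1 / Real.sqrt αψ) * ((αx + αz) / αx) * p.2 -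
            ((αx + αz) * αp / (αx * α)) * m +
            (αz / αx) * (1 / Real.sqrt αψ) * S)) = c := by
  intro S m c hc
  have hαz_pos : 0 < αz := by rw [hαz]; positivity
  have hα_pos : 0 < α := by rw [hα]; positivity
  have hαψ_pos : 0 < αψ := by rw [hαψ]; positivity
  have hslope : αp / α / √(2 * π) ≤ 1 / √αψ * ((αx + αz) / αx) := by
    calc αp / α / √(2 * π) = αp / α * (1 / √(2 * π)) := div_eq_mul_one_div _ _
      _ ≤ αp / α * ((αx + αz) / αx * √(αx / αp ^ 2 + σμ ^ 2)) := by gcongr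
      _ = 1 / √αψ * ((αx + αz) / αx) := by
        rw [hαψ, one_div_sqrt_sq_div_eq hα_pos.le hαp]
        ring
  obtain ⟨y, hy, hunique⟩ := existsUnique_stdNormalCDF_mul_eq (by positivity) hslope
    (Real.sqrt_pos.2 hα_pos).ne' hc
    ((αx + αz) * αp / (αx * α) * m - αz / αx * (1 / √αψ) * S)
  simp only [← sub_add] at hy hunique
  refine ⟨(stdNormalCDF y, y), ⟨range_stdNormalCDF ▸ mem_range_self y, rfl, hy⟩, ?_⟩
  rintro ⟨θ, z⟩ ⟨-, hθ, hz⟩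
  obtain rfl : stdNormalCDF z = θ := hθ
  rw [hunique z hz]
end
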